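/- Let 𝔤 be a finite-dimensional semisimple Lie algebra over ℝ and suppose 𝔤 has a Lie subalgebra 𝔥 of codimension 1 (dim 𝔥 = dim 𝔤 − 1). Then 𝔤 has a Lie ideal isomorphic, as a real Lie algebra, to sl(2, ℝ). -/

import Mathlib

/-!
Since the simple ideals span `L`, one of them, `I`, is not contained in `𝔥`, and `I ∩ 𝔥` has
codimension one in `I`. So let `L` be simple with a subalgebra `H` and a vector `v ∉ H` such that
`L = H + ℝ v`; then `L` itself turns out to be `sl(2, ℝ)`.

Consider the descending filtration `L ⊇ G 0 = H ⊇ G 1 ⊇ ⋯` (`codimFiltration`), where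
`G (n + 1)` consists of the `x ∈ G n` with `⁅x, L⁆ ⊆ G n`. It satisfies `⁅G i, G j⁆ ⊆ G (i + j)`.
If it stabilizes at `n` then `G n` is an ideal inside `H`, so `G n = 0` for large `n`.
For `x ∈ G 2` and any `y`, the operator `ad x ∘ ad y` maps `L` to `G 1` and `G n` to `G (n + 1)`,
so it is nilpotent and the Killing form vanishes on `(x, y)`. By Cartan's criterion the Killing
form of `L` is nondegenerate, hence `G 2 = 0` (`codimFiltration_two_eq_bot`).

Bracketing with `v` embeds `G 0 / G 1` into `L / G 0` and `G 1 / G 2` into `G 0 / G 1`, so each of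
these quotients has dimension at most one and `dim L ≤ 3`. As `L` is simple, `G 1 ≠ 0`.
For `0 ≠ x ∈ G 1`, put `a = ⁅x, v⁆`; then `x, a, v` span `L` and, after adding a multiple of `x`
to `v` and rescaling, form an `sl₂` triple (`exists_spanning_isSl2Triple`). An `sl₂` triple that
spans `L` gives an isomorphism with `sl(2, ℝ)` (`IsSl2Triple.slEquiv`).
-/

open LieAlgebra in
/-- The linear map sending the standard basis `h, e, f` of `sl(2, ℝ)` to the given elements. -/
noncomputable def slToLie {L : Type*} [LieRing L] [LieAlgebra ℝ L] (h e f : L) :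
    SpecialLinear.sl (Fin 2) ℝ →ₗ[ℝ] L where
  toFun A := A.1 0 0 • h + A.1 0 1 • e + A.1 1 0 • f
  map_add' A B := by simp; module
  map_smul' c A := by simp [smul_smul]

open LieAlgebra in
theorem slToLie_lie {L : Type*} [LieRing L] [LieAlgebra ℝ L] {h e f : L}
    (t : IsSl2Triple h e f) (A B : SpecialLinear.sl (Fin 2) ℝ) :
    slToLie h e f ⁅A, B⁆ = ⁅slToLie h e f A, slToLie h e f B⁆ := by
  have key (C : SpecialLinear.sl (Fin 2) ℝ) : C.1 1 1 = - C.1 0 0 := by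
    have h2 : Matrix.trace C.1 = 0 := C.2
    rw [Matrix.trace_fin_two] at h2
    linarith
  have h1 := t.lie_e_f
  have h2 := t.lie_h_e_smul ℝ
  have h3 := t.lie_lie_smul_f ℝ
  have h1' : ⁅f, e⁆ = -h := by rw [← lie_skew, h1]
  have h2' : ⁅e, h⁆ = -((2 : ℝ) • e) := by rw [← lie_skew, h2]
  have h3' : ⁅f, h⁆ = (2 : ℝ) • f := by rw [← lie_skew, h3, neg_neg]
  simp only [slToLie, LinearMap.coe_mk, AddHom.coe_mk, SpecialLinear.sl_bracket, Matrix.sub_apply,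
    Matrix.mul_apply, Fin.sum_univ_two, key, add_lie, lie_add, smul_lie, lie_smul, h1, h2, h3,
    h1', h2', h3', lie_self]
  module

/-- An `sl₂` triple that spans `L` identifies `L` with `sl(2, ℝ)`. -/
theorem IsSl2Triple.slEquiv {L : Type*} [LieRing L] [LieAlgebra ℝ L] {h e f : L}
    (t : IsSl2Triple h e f) (hspan : ∀ y : L, ∃ p q r : ℝ, y = p • h + q • e + r • f) :
    Nonempty (L ≃ₗ⁅ℝ⁆ LieAlgebra.SpecialLinear.sl (Fin 2) ℝ) := by
  let φ : LieAlgebra.SpecialLinear.sl (Fin 2) ℝ →ₗ⁅ℝ⁆ L :=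
    { slToLie h e f with map_lie' := fun {A B} => slToLie_lie t A B }
  have hφ : Function.Bijective φ := by
    constructor
    · rw [injective_iff_map_eq_zero]
      intro A hA
      have hA' : A.1 0 0 • h + A.1 0 1 • e + A.1 1 0 • f = 0 := hA
      have h1 := t.lie_e_f
      have h2' : ⁅e, h⁆ = -((2 : ℝ) • e) := by rw [← lie_skew, t.lie_h_e_smul ℝ]
      -- applying `ad e` once and twice isolates the coefficients of `h` and `f`
      have e1 : -(2 * A.1 0 0) • e + A.1 1 0 • h = 0 := by
        have := congrArg (fun z => ⁅e, z⁆) hA'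
        simp only [lie_add, lie_smul, h1, h2', lie_self, lie_zero] at this
        rw [← this]; module
      have e2 : (-(2 * A.1 1 0)) • e = 0 := by
        have := congrArg (fun z => ⁅e, z⁆) e1
        simp only [lie_add, lie_smul, h2', lie_self, lie_zero] at this
        rw [← this]; module
      have z1 : A.1 1 0 = 0 := by simpa [t.e_ne_zero] using e2
      have z2 : A.1 0 0 = 0 := by simpa [t.e_ne_zero, z1] using e1
      have z3 : A.1 0 1 = 0 := by simpa [t.e_ne_zero, z1, z2] using hA'
      have z4 : A.1 1 1 = 0 := by
        have h2 : Matrix.trace A.1 = 0 := A.2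
        rw [Matrix.trace_fin_two] at h2
        linarith
      ext i j
      fin_cases i <;> fin_cases j <;> simp [z1, z2, z3, z4]
    · intro y
      obtain ⟨p, q, r, rfl⟩ := hspan y
      refine ⟨⟨!![p, q; r, -p], ?_⟩, ?_⟩
      · change Matrix.trace !![p, q; r, -p] = 0
        simp [Matrix.trace_fin_two]
      · change (!![p, q; r, -p] 0 0) • h + (!![p, q; r, -p] 0 1) • e
          + (!![p, q; r, -p] 1 0) • f = _
        simp
  exact ⟨(LieEquiv.ofBijective φ hφ).symm⟩

section Filtration

variable {L : Type*} [LieRing L] [LieAlgebra ℝ L]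

/-- The filtration of `H` attached to the pair `(L, H)`: it starts with `H`, and its next term
consists of the elements of the present one whose brackets with all of `L` stay in the present
one. -/
def codimFiltration (H : LieSubalgebra ℝ L) : ℕ → Submodule ℝ L
  | 0 => H.toSubmodule
  | n + 1 =>
    { carrier := {x | x ∈ codimFiltration H n ∧ ∀ y, ⁅x, y⁆ ∈ codimFiltration H n}
      add_mem' := fun {a b} ha hb => ⟨add_mem ha.1 hb.1, fun y => by
        rw [add_lie]; exact add_mem (ha.2 y) (hb.2 y)⟩
      zero_mem' := ⟨zero_mem _, fun y => by rw [zero_lie]; exact zero_mem _⟩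
      smul_mem' := fun c a ha => ⟨Submodule.smul_mem _ c ha.1, fun y => by
        rw [smul_lie]; exact Submodule.smul_mem _ c (ha.2 y)⟩ }

variable (H : LieSubalgebra ℝ L)

theorem mem_codimFiltration_zero {x : L} : x ∈ codimFiltration H 0 ↔ x ∈ H := Iff.rfl

theorem mem_codimFiltration_succ {n : ℕ} {x : L} : x ∈ codimFiltration H (n + 1) ↔
    x ∈ codimFiltration H n ∧ ∀ y, ⁅x, y⁆ ∈ codimFiltration H n := Iff.rfl

theorem codimFiltration_antitone : Antitone (codimFiltration H) :=
  antitone_nat_of_succ_le fun _ _ hx => hx.1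

/-- The filtration is multiplicative: the bracket of the `i`-th and `j`-th terms lies in the
`(i + j)`-th term. -/
theorem lie_mem_codimFiltration (n : ℕ) : ∀ i j : ℕ, i + j = n → ∀ x ∈ codimFiltration H i,
    ∀ y ∈ codimFiltration H j, ⁅x, y⁆ ∈ codimFiltration H n := by
  induction n with
  | zero =>
    intro i j hij x hx y hy
    obtain ⟨rfl, rfl⟩ : i = 0 ∧ j = 0 := by omega
    exact H.lie_mem hx hy
  | succ n ih =>
    -- bracketing `x` with `w` lowers its index by one; for `i = 0` it is `y` whose index drops
    have left : ∀ i j : ℕ, i + j = n + 1 → ∀ x ∈ codimFiltration H i,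
        ∀ y ∈ codimFiltration H j, ∀ w : L, ⁅⁅x, w⁆, y⁆ ∈ codimFiltration H n := by
      intro i j hij x hx y hy w
      cases i with
      | zero =>
        obtain rfl : j = n + 1 := by omega
        rw [← lie_skew]
        exact neg_mem (hy.2 _)
      | succ i => exact ih i j (by omega) _ (hx.2 w) _ hy
    intro i j hij x hx y hy
    refine ⟨?_, fun w => ?_⟩
    · cases i with
      | zero =>
        obtain rfl : j = n + 1 := by omega
        rw [← lie_skew]
        exact neg_mem (hy.2 _)
      | succ i => exact ih i j (by omega) _ hx.1 _ hy
    · have e : ⁅⁅x, y⁆, w⁆ = ⁅⁅x, w⁆, y⁆ - ⁅⁅y, w⁆, x⁆ := by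
        rw [lie_lie x y w, ← lie_skew x ⁅y, w⁆, ← lie_skew y ⁅x, w⁆]; abel
      rw [e]
      exact sub_mem (left i j hij x hx y hy w) (left j i (by omega) y hy x hx w)

/-- A term at which the filtration stabilizes is an ideal contained in `H`, so in a simple Lie
algebra the filtration reaches `0`. -/
theorem exists_codimFiltration_eq_bot [Module.Finite ℝ L] [LieAlgebra.IsSimple ℝ L]
    (hH : H ≠ ⊤) : ∃ n, codimFiltration H n = ⊥ := by
  obtain ⟨n, hn⟩ := IsArtinian.monotone_stabilizes
    (⟨fun n => OrderDual.toDual (codimFiltration H n), fun a b hab => codimFiltration_antitone H hab⟩ :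
      ℕ →o (Submodule ℝ L)ᵒᵈ)
  have hn' : codimFiltration H n = codimFiltration H (n + 1) := hn (n + 1) (by omega)
  let J : LieIdeal ℝ L :=
    { codimFiltration H n with
      lie_mem := fun {y x} hx => by
        have hx' : x ∈ codimFiltration H (n + 1) := hn' ▸ hx
        rw [← lie_skew]
        exact neg_mem (hx'.2 y) }
  have hJ : (J : Submodule ℝ L) = codimFiltration H n := rfl
  refine ⟨n, ?_⟩
  rcases LieAlgebra.IsSimple.eq_bot_or_eq_top (R := ℝ) J with h | h
  · rw [← hJ, h]; rfl
  · exfalso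
    apply hH
    rw [eq_top_iff]
    intro x _
    have : x ∈ J := h ▸ LieSubmodule.mem_top x
    exact codimFiltration_antitone H (Nat.zero_le n) this

/-- The second term of the filtration lies in the kernel of the Killing form, which is zero. -/
theorem codimFiltration_two_eq_bot [Module.Finite ℝ L] [LieAlgebra.IsSimple ℝ L]
    (hH : H ≠ ⊤) : codimFiltration H 2 = ⊥ := by
  rw [eq_bot_iff]
  intro x hx
  obtain ⟨N, hN⟩ := exists_codimFiltration_eq_bot H hH
  have hker : x ∈ LinearMap.ker (killingForm ℝ L) := by
    ext y
    rw [killingForm_apply_apply]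
    refine (LinearMap.isNilpotent_trace_of_isNilpotent ?_).eq_zero
    set T := LieAlgebra.ad ℝ L x ∘ₗ LieAlgebra.ad ℝ L y with hT
    have hpow : ∀ k : ℕ, ∀ z, (T ^ (k + 1)) z ∈ codimFiltration H (k + 1) := by
      intro k
      induction k with
      | zero => intro z; simpa [hT] using hx.2 _
      | succ k ih =>
        intro z
        rw [pow_succ', Module.End.mul_apply]
        have h1 := (ih z).2 y
        have h2 : ⁅y, (T ^ (k + 1)) z⁆ ∈ codimFiltration H k := by
          rw [← lie_skew]; exact neg_mem h1
        have := lie_mem_codimFiltration H (2 + k) 2 k rfl x hx _ h2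
        rw [add_comm] at this
        exact this
    refine ⟨N + 1, ?_⟩
    ext z
    have := codimFiltration_antitone H (Nat.le_succ N) (hpow N z)
    rw [hN] at this
    simpa using this
  -- Cartan's criterion supplies the `IsKilling` instance
  rw [LieAlgebra.IsKilling.ker_killingForm_eq_bot] at hker
  exact hker

end Filtration

/-- A simple Lie algebra is not abelian, hence perfect; so its brackets do not all lie on one
line. -/
theorem not_forall_lie_mem_span {L : Type*} [LieRing L] [LieAlgebra ℝ L]
    [LieAlgebra.IsSimple ℝ L] (w : L) : ¬ ∀ x y : L, ⁅x, y⁆ ∈ Submodule.span ℝ {w} := by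
  intro hw
  apply LieAlgebra.IsSimple.non_abelian ℝ (L := L)
  let J : LieIdeal ℝ L := { Submodule.span ℝ {w} with lie_mem := fun {y x} _ => hw y x }
  have hJ : ∀ z, z ∈ J ↔ z ∈ Submodule.span ℝ {w} := fun z => Iff.rfl
  refine ⟨fun x y => ?_⟩
  rcases LieAlgebra.IsSimple.eq_bot_or_eq_top (R := ℝ) J with h | h
  · have := (hJ _).2 (hw x y)
    rw [h] at this
    simpa using this
  · have hx := (hJ x).1 (h ▸ LieSubmodule.mem_top x)
    have hy := (hJ y).1 (h ▸ LieSubmodule.mem_top y)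
    obtain ⟨a, rfl⟩ := Submodule.mem_span_singleton.1 hx
    obtain ⟨b, rfl⟩ := Submodule.mem_span_singleton.1 hy
    simp

/-- A simple Lie algebra of the form `H + ℝ v`, with `H` a proper subalgebra, is spanned by an
`sl₂` triple. -/
theorem exists_spanning_isSl2Triple {L : Type*} [LieRing L] [LieAlgebra ℝ L] [Module.Finite ℝ L]
    [LieAlgebra.IsSimple ℝ L] (H : LieSubalgebra ℝ L) (v : L) (hv : v ∉ H)
    (hvH : ∀ y : L, ∃ c : ℝ, y - c • v ∈ H) :
    ∃ h e f : L, IsSl2Triple h e f ∧ ∀ y : L, ∃ p q r : ℝ, y = p • h + q • e + r • f := by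
  have hH : H ≠ ⊤ := by rintro rfl; exact hv trivial
  have hG2 := codimFiltration_two_eq_bot H hH
  -- as `L = H + ℝ v`, the bracket with `v` alone decides membership in the next term
  have memG1 : ∀ a ∈ H, ⁅a, v⁆ ∈ H → a ∈ codimFiltration H 1 := by
    intro a ha hav
    refine ⟨ha, fun y => ?_⟩
    obtain ⟨c, hc⟩ := hvH y
    have : ⁅a, y⁆ = ⁅a, y - c • v⁆ + c • ⁅a, v⁆ := by simp
    rw [this]
    exact H.add_mem (H.lie_mem ha hc) (H.smul_mem c hav)
  have memG2 : ∀ x ∈ codimFiltration H 1, ⁅x, v⁆ ∈ codimFiltration H 1 → x = 0 := by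
    intro x hx hxv
    have : x ∈ codimFiltration H 2 := by
      refine ⟨hx, fun y => ?_⟩
      obtain ⟨c, hc⟩ := hvH y
      have : ⁅x, y⁆ = ⁅x, y - c • v⁆ + c • ⁅x, v⁆ := by simp
      rw [this]
      exact add_mem (lie_mem_codimFiltration H 1 1 0 rfl x hx _ hc) (Submodule.smul_mem _ c hxv)
    simpa [hG2] using this
  have dim0 : ∀ a ∈ H, ⁅a, v⁆ ∉ H → ∀ b ∈ H, ∃ c : ℝ, b - c • a ∈ codimFiltration H 1 := by
    intro a ha hav b hb
    obtain ⟨s, hs⟩ := hvH ⁅a, v⁆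
    obtain ⟨r, hr⟩ := hvH ⁅b, v⁆
    have hs0 : s ≠ 0 := by rintro rfl; apply hav; simpa using hs
    refine ⟨r / s, memG1 _ (H.sub_mem hb (H.smul_mem _ ha)) ?_⟩
    have : ⁅b - (r / s) • a, v⁆ = (⁅b, v⁆ - r • v) - (r / s) • (⁅a, v⁆ - s • v) := by
      rw [sub_lie, smul_lie, smul_sub, smul_smul, div_mul_cancel₀ _ hs0]; abel
    rw [this]
    exact H.sub_mem hr (H.smul_mem _ hs)
  have hG1 : codimFiltration H 1 ≠ ⊥ := by
    intro hbot
    by_cases hex : ∃ a ∈ H, ⁅a, v⁆ ∉ H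
    · obtain ⟨a, ha, hav⟩ := hex
      -- now `L` is spanned by `a` and `v`
      have hspan : ∀ y : L, ∃ p q : ℝ, y = p • a + q • v := by
        intro y
        obtain ⟨q, hq⟩ := hvH y
        obtain ⟨p, hp⟩ := dim0 a ha hav _ hq
        rw [hbot, Submodule.mem_bot] at hp
        exact ⟨p, q, by rw [← sub_eq_zero, ← hp]; abel⟩
      apply not_forall_lie_mem_span (L := L) ⁅a, v⁆
      intro x y
      obtain ⟨p, q, rfl⟩ := hspan x
      obtain ⟨p', q', rfl⟩ := hspan y
      rw [Submodule.mem_span_singleton]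
      refine ⟨p * q' - q * p', ?_⟩
      simp only [add_lie, lie_add, smul_lie, lie_smul, lie_self, ← lie_skew v a]
      module
    · push Not at hex
      have hspan : ∀ y : L, ∃ q : ℝ, y = q • v := by
        intro y
        obtain ⟨q, hq⟩ := hvH y
        have := memG1 _ hq (hex _ hq)
        rw [hbot, Submodule.mem_bot] at this
        exact ⟨q, sub_eq_zero.1 this⟩
      apply not_forall_lie_mem_span (L := L) v
      intro x y
      obtain ⟨q, hq⟩ := hspan ⁅x, y⁆
      exact Submodule.mem_span_singleton.2 ⟨q, hq.symm⟩
  obtain ⟨x, hx, hx0⟩ := Submodule.exists_mem_ne_zero_of_ne_bot hG1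
  set a := ⁅x, v⁆ with ha_def
  have ha : a ∈ H := hx.2 v
  have ha1 : a ∉ codimFiltration H 1 := fun h => hx0 (memG2 x hx h)
  have hav : ⁅a, v⁆ ∉ H := fun h => ha1 (memG1 a ha h)
  have dim1 : ∀ b ∈ codimFiltration H 1, ∃ c : ℝ, b = c • x := by
    intro b hb
    obtain ⟨c, hc⟩ := dim0 a ha hav _ (hb.2 v)
    refine ⟨c, sub_eq_zero.1 (memG2 _ (sub_mem hb (Submodule.smul_mem _ c hx)) ?_)⟩
    rwa [sub_lie, smul_lie]
  have hspan : ∀ y : L, ∃ p q r : ℝ, y = p • a + q • x + r • v := by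
    intro y
    obtain ⟨r, hr⟩ := hvH y
    obtain ⟨p, hp⟩ := dim0 a ha hav _ hr
    obtain ⟨q, hq⟩ := dim1 _ hp
    exact ⟨p, q, r, by rw [add_assoc, add_comm (q • x), ← hq]; abel⟩
  obtain ⟨l, hl⟩ : ∃ l : ℝ, ⁅a, x⁆ = l • x :=
    dim1 _ (lie_mem_codimFiltration H 1 0 1 rfl a ha x hx)
  obtain ⟨n, r, m, hm⟩ := hspan ⁅a, v⁆
  have hm0 : m ≠ 0 := by
    rintro rfl
    apply hav
    rw [hm, zero_smul, add_zero]
    exact H.add_mem (H.smul_mem _ ha) (H.smul_mem _ hx.1)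
  have ha0 : a ≠ 0 := by intro h; apply ha1; rw [h]; exact zero_mem _
  -- the Jacobi identity for `a, x, v`, where `⁅a, ⁅x, v⁆⁆ = ⁅a, a⁆ = 0`
  have jac : (l + m) • a - (n * l) • x = 0 := by
    have h1 : ⁅a, ⁅x, v⁆⁆ = ⁅⁅a, x⁆, v⁆ + ⁅x, ⁅a, v⁆⁆ := leibniz_lie a x v
    rw [← ha_def, lie_self, hl, hm] at h1
    simp only [lie_add, smul_lie, lie_smul, lie_self, ← ha_def, ← lie_skew x a, hl] at h1
    rw [h1]; module
  have hlm : l = -m := by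
    by_contra hne
    apply ha1
    have hne' : l + m ≠ 0 := fun h => hne (by linarith)
    have : a = ((l + m)⁻¹ * (n * l)) • x := by
      rw [mul_smul, ← sub_eq_zero.1 jac, smul_smul, inv_mul_cancel₀ hne', one_smul]
    rw [this]
    exact Submodule.smul_mem _ _ hx
  have hn : n = 0 := by
    have : (n * l) • x = 0 := by simpa [hlm] using jac
    have := (smul_eq_zero.1 this).resolve_right hx0
    rcases mul_eq_zero.1 this with h | h
    · exact h
    · exact absurd (by linarith) hm0
  subst hlm hn
  rw [zero_smul, zero_add] at hm
  -- `v + (r / (2 m)) x` is an eigenvector of `ad a` for the eigenvalue `m`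
  refine ⟨(-2 / m) • a, x, (-2 / m) • (v + (r / (2 * m)) • x), ⟨?_, ?_, ?_, ?_⟩, ?_⟩
  · exact smul_ne_zero (div_ne_zero (by norm_num) hm0) ha0
  · simp [← ha_def]
  · rw [smul_lie, hl, smul_smul, ← Nat.cast_smul_eq_nsmul ℝ]
    congr 1
    field_simp
    norm_num
  · rw [← Nat.cast_smul_eq_nsmul ℝ]
    simp only [smul_lie, lie_smul, lie_add, hl, hm]
    push_cast
    (match_scalars <;> field_simp); all_goals ring
  · intro y
    obtain ⟨p, q, s, rfl⟩ := hspan y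
    refine ⟨-m / 2 * p, q - s * (r / (2 * m)), -m / 2 * s, ?_⟩
    (match_scalars <;> field_simp); all_goals ring

/-- A finite-dimensional real semisimple Lie algebra with a Lie subalgebra of
codimension one has a Lie ideal isomorphic to `sl(2, ℝ)`. -/
theorem semisimple_with_codim_one_subalgebra_has_sl2_ideal
    {L : Type*} [LieRing L] [LieAlgebra ℝ L] [Module.Finite ℝ L]
    [LieAlgebra.IsSemisimple ℝ L]
    (𝔥 : LieSubalgebra ℝ L)
    (hcodim : Module.finrank ℝ 𝔥 + 1 = Module.finrank ℝ L) :
    ∃ I : LieIdeal ℝ L,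
      Nonempty (I ≃ₗ⁅ℝ⁆ LieAlgebra.SpecialLinear.sl (Fin 2) ℝ) := by
  have hq : Module.finrank ℝ (L ⧸ 𝔥.toSubmodule) = 1 := by
    have h1 := 𝔥.toSubmodule.finrank_quotient_add_finrank
    have h2 : Module.finrank ℝ 𝔥.toSubmodule = Module.finrank ℝ 𝔥 := rfl
    omega
  obtain ⟨I, hI, v, hvI, hv⟩ : ∃ I : LieIdeal ℝ L, IsAtom I ∧ ∃ v ∈ I, v ∉ 𝔥 := by
    by_contra! hall
    have hle : (⊤ : Submodule ℝ L) ≤ 𝔥.toSubmodule := by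
      rw [← LieSubmodule.top_toSubmodule (R := ℝ) (L := L) (M := L),
        ← LieAlgebra.IsSemisimple.sSup_atoms_eq_top (R := ℝ) (L := L),
        LieSubmodule.sSup_toSubmodule]
      refine sSup_le ?_
      rintro _ ⟨J, hJ, rfl⟩
      exact fun z hz => hall J hJ z hz
    have : Module.finrank ℝ 𝔥 = Module.finrank ℝ L := by
      have h2 : Module.finrank ℝ 𝔥.toSubmodule = Module.finrank ℝ 𝔥 := rfl
      rw [← h2, top_le_iff.1 hle, finrank_top]
    omega
  have hvL : ∀ y : L, ∃ c : ℝ, y - c • v ∈ 𝔥 := by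
    intro y
    have hv0 : 𝔥.toSubmodule.mkQ v ≠ 0 := by simpa using hv
    obtain ⟨c, hc⟩ := (finrank_eq_one_iff_of_nonzero' _ hv0).1 hq (𝔥.toSubmodule.mkQ y)
    refine ⟨c, ?_⟩
    rw [← map_smul, eq_comm, ← sub_eq_zero, ← map_sub, Submodule.mkQ_apply,
      Submodule.Quotient.mk_eq_zero] at hc
    exact hc
  have := LieAlgebra.IsSemisimple.isSimple_of_isAtom I hI
  obtain ⟨h, e, f, t, hspan⟩ := exists_spanning_isSl2Triple (L := I)
    (𝔥.comap I.incl) ⟨v, hvI⟩ hv (fun y => hvL y)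
  exact ⟨I, t.slEquiv hspan⟩
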